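/- arXiv:1604.04809 — 4 statements merged into one kernel-verified Lean document; each statement's English description precedes it below -/
import Mathlib

section
/- There is a constant c (independent of the game) such that every coordination game without bonuses on an unweighted partition-cycle on n nodes with top part of size k admits, from every joint strategy, a finite improvement path of length at most c·n·(n−k) (hence ending in a Nash equilibrium). -/
open scoped Classical

namespace CG

/-- Payoff of node `i` in a coordination game on a weighted directed graph
with adjacency `adj` (an edge `j → i` is `adj j i`), edge weights `w`,
bonuses `β`, under the joint strategy `s`. -/
noncomputable def payoff {V M : Type} [Fintype V] (adj : V → V → Prop)
    (w : V → V → ℝ) (β : V → M → ℕ) (s : V → M) (i : V) : ℝ :=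
  (∑ j ∈ Finset.univ.filter (fun j => adj j i ∧ s j = s i), w j i) + (β i (s i) : ℝ)

/-- A joint strategy assigns to every node a colour from its colour set. -/
def Valid {V M : Type} (C : V → Finset M) (s : V → M) : Prop :=
  ∀ i, s i ∈ C i

/-- `s'` is a profitable deviation of the (non-empty) coalition
`K = {i | s i ≠ s' i}` from `s`. -/
def ProfDev {V M : Type} [Fintype V] (adj : V → V → Prop) (w : V → V → ℝ)
    (β : V → M → ℕ) (C : V → Finset M) (s s' : V → M) : Prop :=
  Valid C s' ∧ s ≠ s' ∧
    ∀ i, s i ≠ s' i → payoff adj w β s i < payoff adj w β s' i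

/-- A profitable deviation of a single player. -/
def UniDev {V M : Type} [Fintype V] (adj : V → V → Prop) (w : V → V → ℝ)
    (β : V → M → ℕ) (C : V → Finset M) (s s' : V → M) : Prop :=
  ProfDev adj w β C s s' ∧ ∃ i, ∀ j, j ≠ i → s j = s' j

/-- A Nash equilibrium: no single player has a profitable deviation. -/
def IsNash {V M : Type} [Fintype V] (adj : V → V → Prop) (w : V → V → ℝ)
    (β : V → M → ℕ) (C : V → Finset M) (s : V → M) : Prop :=
  Valid C s ∧ ∀ s', ¬ UniDev adj w β C s s'

/-- A strong equilibrium: no coalition has a profitable deviation. -/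
def IsStrong {V M : Type} [Fintype V] (adj : V → V → Prop) (w : V → V → ℝ)
    (β : V → M → ℕ) (C : V → Finset M) (s : V → M) : Prop :=
  Valid C s ∧ ∀ s', ¬ ProfDev adj w β C s s'

/-- There is a finite improvement path of length `L` starting at `s`
(each step a profitable single-player deviation) ending in a Nash equilibrium. -/
def ImpPath {V M : Type} [Fintype V] (adj : V → V → Prop) (w : V → V → ℝ)
    (β : V → M → ℕ) (C : V → Finset M) (s : V → M) (L : ℕ) : Prop :=
  ∃ σ : ℕ → V → M, σ 0 = s ∧
    (∀ t, t < L → UniDev adj w β C (σ t) (σ (t + 1))) ∧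
    IsNash adj w β C (σ L)

/-- There is a finite c-improvement path of length `L` starting at `s`
(each step a profitable coalition deviation) ending in a strong equilibrium. -/
def CImpPath {V M : Type} [Fintype V] (adj : V → V → Prop) (w : V → V → ℝ)
    (β : V → M → ℕ) (C : V → Finset M) (s : V → M) (L : ℕ) : Prop :=
  ∃ σ : ℕ → V → M, σ 0 = s ∧
    (∀ t, t < L → ProfDev adj w β C (σ t) (σ (t + 1))) ∧
    IsStrong adj w β C (σ L)

/-- Adjacency of the simple cycle `1 → 2 → ⋯ → n → 1` on `Fin n`. -/
def cycAdj (n : ℕ) : Fin n → Fin n → Prop :=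
  fun i j => (i.val + 1) % n = j.val

/-- Adjacency of a partition-cycle on `Fin n`: the cyclic edges
`i → i+1 (mod n)` together with the cross-edges `Ep`. -/
def pcAdj (n : ℕ) (Ep : Finset (Fin n × Fin n)) : Fin n → Fin n → Prop :=
  fun i j => (i.val + 1) % n = j.val ∨ (i, j) ∈ Ep

/-- A partition-cycle on `Fin n` with top part `V_T = {i | i.val < k}`
(of size `k`, `1 ≤ k < n`) and bottom part `V_B = {i | k ≤ i.val}`:
the cross-edges `Ep` go from `V_T` to `V_B` and are not cyclic edges. -/
def IsPartitionCycle (n k : ℕ) (Ep : Finset (Fin n × Fin n)) : Prop :=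
  1 ≤ k ∧ k < n ∧
  (∀ e ∈ Ep, e.1.val < k ∧ k ≤ e.2.val) ∧
  (∀ e ∈ Ep, (e.1.val + 1) % n ≠ e.2.val)

noncomputable def cnt {n : ℕ} {M : Type} (adj : Fin n → Fin n → Prop) (s : Fin n → M)
    (i : Fin n) (c : M) : ℕ :=
  (Finset.univ.filter (fun j => adj j i ∧ s j = c)).card

noncomputable def tc {n : ℕ} {M : Type} (k : ℕ) (adj : Fin n → Fin n → Prop) (s : Fin n → M)
    (i : Fin n) (c : M) : ℕ :=
  (Finset.univ.filter (fun j => adj j i ∧ j.val < k ∧ s j = c)).card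

/-- Structural facts of a partition-cycle used in the proof. -/
structure PC (n k : ℕ) (adj : Fin n → Fin n → Prop) : Prop where
  k1 : 1 ≤ k
  kn : k < n
  lt : ∀ j i, adj j i → 1 ≤ i.val → j < i
  z : ∀ j i, adj j i → i.val = 0 → j.val = n - 1
  bot : ∀ j i, adj j i → 1 ≤ i.val → k ≤ j.val → j.val + 1 = i.val
  top : ∀ j i, adj j i → 1 ≤ i.val → i.val < k → j.val + 1 = i.val

lemma pc_of {n k : ℕ} {Ep : Finset (Fin n × Fin n)} (h : IsPartitionCycle n k Ep) :
    PC n k (pcAdj n Ep) := by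
  obtain ⟨h1, h2, h3, h4⟩ := h
  have key : ∀ j i : Fin n, pcAdj n Ep j i →
      ((j.val + 1 = i.val) ∨ (j.val = n - 1 ∧ i.val = 0) ∨ (j.val < k ∧ k ≤ i.val)) := by
    intro j i hji
    rcases hji with h | h
    · have := j.isLt
      by_cases hj : j.val + 1 < n
      · rw [Nat.mod_eq_of_lt hj] at h; omega
      · have e : j.val + 1 = n := by omega
        rw [e, Nat.mod_self] at h; omega
    · right; right; exact h3 _ h
  refine ⟨h1, h2, ?_, ?_, ?_, ?_⟩ <;> intro j i hji <;> have := key j i hji <;>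
    (try rw [Fin.lt_def]) <;> omega

section
variable {n k : ℕ} {M : Type} {adj : Fin n → Fin n → Prop}

lemma cnt_mono {s s' : Fin n → M} {i : Fin n} {c : M}
    (h : ∀ j, adj j i → s j = c → s' j = c) : cnt adj s i c ≤ cnt adj s' i c := by
  apply Finset.card_le_card
  intro j hj
  simp only [Finset.mem_filter, Finset.mem_univ, true_and] at hj ⊢
  exact ⟨hj.1, h j hj.1 hj.2⟩

lemma cnt_congr {s s' : Fin n → M} {i : Fin n} (c : M)
    (h : ∀ j, adj j i → s j = s' j) : cnt adj s i c = cnt adj s' i c :=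
  le_antisymm (cnt_mono fun j hj e => (h j hj) ▸ e) (cnt_mono fun j hj e => (h j hj).symm ▸ e)

lemma tc_mono {s s' : Fin n → M} {i : Fin n} {c : M}
    (h : ∀ j, adj j i → j.val < k → s j = c → s' j = c) : tc k adj s i c ≤ tc k adj s' i c := by
  apply Finset.card_le_card
  intro j hj
  simp only [Finset.mem_filter, Finset.mem_univ, true_and] at hj ⊢
  exact ⟨hj.1, hj.2.1, h j hj.1 hj.2.1 hj.2.2⟩

lemma tc_congr {s s' : Fin n → M} {i : Fin n} (c : M)
    (h : ∀ j, adj j i → s j = s' j) : tc k adj s i c = tc k adj s' i c :=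
  le_antisymm (tc_mono fun j hj _ e => (h j hj) ▸ e) (tc_mono fun j hj _ e => (h j hj).symm ▸ e)

lemma tc_le_cnt (s : Fin n → M) (i : Fin n) (c : M) : tc k adj s i c ≤ cnt adj s i c := by
  apply Finset.card_le_card
  intro j hj
  simp only [Finset.mem_filter, Finset.mem_univ, true_and] at hj ⊢
  exact ⟨hj.1, hj.2.2⟩

lemma cnt_le_tc (s : Fin n → M) (i : Fin n) (c : M)
    (h : ∀ j, adj j i → k ≤ j.val → s j ≠ c) : cnt adj s i c ≤ tc k adj s i c := by
  apply Finset.card_le_card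
  intro j hj
  simp only [Finset.mem_filter, Finset.mem_univ, true_and] at hj ⊢
  refine ⟨hj.1, ?_, hj.2⟩
  by_contra hk
  exact h j hj.1 (by omega) hj.2

lemma cnt_pos {s : Fin n → M} {i : Fin n} {c : M} (h : 0 < cnt adj s i c) :
    ∃ j, adj j i ∧ s j = c := by
  obtain ⟨j, hj⟩ := Finset.card_pos.1 h
  simp only [Finset.mem_filter, Finset.mem_univ, true_and] at hj
  exact ⟨j, hj⟩

lemma cnt_le_tc_succ (hpc : PC n k adj) (s : Fin n → M) (i : Fin n) (c : M) :
    cnt adj s i c ≤ tc k adj s i c + 1 := by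
  have h1 : (Finset.univ.filter (fun j => adj j i ∧ k ≤ j.val)).card ≤ 1 := by
    rw [Finset.card_le_one]
    intro a ha b hb
    simp only [Finset.mem_filter, Finset.mem_univ, true_and] at ha hb
    apply Fin.ext
    by_cases hi : i.val = 0
    · rw [hpc.z a i ha.1 hi, hpc.z b i hb.1 hi]
    · have := hpc.bot a i ha.1 (by omega) ha.2
      have := hpc.bot b i hb.1 (by omega) hb.2
      omega
  refine le_trans ?_ (Nat.add_le_add_left h1 _)
  refine le_trans (Finset.card_le_card ?_) (Finset.card_union_le _ _)
  intro j hj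
  simp only [Finset.mem_filter, Finset.mem_univ, true_and, Finset.mem_union] at hj ⊢
  rcases lt_or_ge j.val k with h | h
  · exact Or.inl ⟨hj.1, h, hj.2⟩
  · exact Or.inr ⟨hj.1, h⟩

lemma no_loop (hpc : PC n k adj) (i : Fin n) : ¬ adj i i := by
  intro h
  have := hpc.k1
  have := hpc.kn
  by_cases hi : i.val = 0
  · have := hpc.z i i h hi; omega
  · exact lt_irrefl _ (hpc.lt i i h (by omega))

lemma payoff_eq (s : Fin n → M) (i : Fin n) :
    payoff adj (fun _ _ => 1) (fun _ _ => 0) s i = (cnt adj s i (s i) : ℝ) := by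
  simp [payoff, cnt]

lemma br (hpc : PC n k adj) (C : Fin n → Finset M) (s : Fin n → M) (hs : Valid C s) (i : Fin n) :
    ∃ c ∈ C i, (∀ c' ∈ C i, cnt adj s i c' ≤ cnt adj s i c) ∧
      (c ≠ s i → cnt adj s i (s i) < cnt adj s i c ∧
        ∀ c' ∈ C i, tc k adj s i c' ≤ tc k adj s i c) := by
  by_cases h : ∀ c' ∈ C i, cnt adj s i c' ≤ cnt adj s i (s i)
  · exact ⟨s i, hs i, h, fun h => absurd rfl h⟩
  · push Not at h
    obtain ⟨b, hb, hlt⟩ := h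
    obtain ⟨c, hc, hcm⟩ := Finset.exists_max_image (C i) (cnt adj s i) ⟨b, hb⟩
    obtain ⟨a, ha, ham⟩ := Finset.exists_max_image (C i) (tc k adj s i) ⟨b, hb⟩
    by_cases e : tc k adj s i a ≤ tc k adj s i c
    · exact ⟨c, hc, hcm, fun _ => ⟨lt_of_lt_of_le hlt (hcm b hb), fun c' h' => (ham c' h').trans e⟩⟩
    · have h1 := cnt_le_tc_succ hpc s i c
      have h2 := tc_le_cnt (k := k) (adj := adj) s i a
      have h3 : cnt adj s i c ≤ cnt adj s i a := by omega
      exact ⟨a, ha, fun c' h' => (hcm c' h').trans h3,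
        fun _ => ⟨lt_of_lt_of_le hlt ((hcm b hb).trans h3), ham⟩⟩

/-- reachability by exactly `L` unilateral profitable deviations -/
inductive Reach (adj : Fin n → Fin n → Prop) (C : Fin n → Finset M) :
    (Fin n → M) → (Fin n → M) → ℕ → Prop
  | refl (s) : Reach adj C s s 0
  | tail {s t u L} : Reach adj C s t L →
      UniDev adj (fun _ _ => 1) (fun _ _ => 0) C t u → Reach adj C s u (L + 1)

lemma Reach.trans {C : Fin n → Finset M} {s t u : Fin n → M} {L L' : ℕ}
    (h : Reach adj C s t L) (h' : Reach adj C t u L') : Reach adj C s u (L + L') := by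
  induction h' with
  | refl => exact h
  | tail _ hd ih => exact Reach.tail ih hd

lemma Reach.path {C : Fin n → Finset M} {s t : Fin n → M} {L : ℕ}
    (h : Reach adj C s t L) : ∃ σ : ℕ → Fin n → M, σ 0 = s ∧ σ L = t ∧
      ∀ r, r < L → UniDev adj (fun _ _ => 1) (fun _ _ => 0) C (σ r) (σ (r + 1)) := by
  induction h with
  | refl => exact ⟨fun _ => s, rfl, rfl, fun r hr => absurd hr (Nat.not_lt_zero r)⟩
  | @tail t u L _ hd ih =>
    obtain ⟨σ, h0, hL, hσ⟩ := ih
    refine ⟨fun r => if r ≤ L then σ r else u, by simp [h0], by simp, ?_⟩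
    intro r hr
    by_cases hrL : r = L
    · subst hrL; simp [hL, hd]
    · have h1 : r < L := by omega
      simp only [h1.le, if_true, Nat.succ_le_of_lt h1]
      exact hσ r h1

lemma step (hpc : PC n k adj) (C : Fin n → Finset M) (s : Fin n → M) (hs : Valid C s) (i : Fin n) :
    ∃ s', Valid C s' ∧ (∃ L ≤ 1, Reach adj C s s' L) ∧ (∀ j, j ≠ i → s' j = s j) ∧
      (∀ c' ∈ C i, cnt adj s i c' ≤ cnt adj s i (s' i)) ∧
      (s' i ≠ s i → cnt adj s i (s i) < cnt adj s i (s' i) ∧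
        ∀ c' ∈ C i, tc k adj s i c' ≤ tc k adj s i (s' i)) := by
  obtain ⟨c, hc, h1, h2⟩ := br hpc C s hs i
  have hoff : ∀ j, j ≠ i → Function.update s i c j = s j := fun j hj => by simp [hj]
  have hv : Valid C (Function.update s i c) := by
    intro j
    by_cases hj : j = i
    · subst hj; simpa using hc
    · rw [hoff j hj]; exact hs j
  refine ⟨Function.update s i c, hv, ?_, hoff, by simpa using h1, by simpa using h2⟩
  by_cases e : c = s i
  · refine ⟨0, by omega, ?_⟩
    subst e
    rw [Function.update_eq_self]
    exact Reach.refl s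
  · refine ⟨0 + 1, by omega, Reach.tail (Reach.refl s) ⟨⟨hv, ?_, ?_⟩, i, fun j hj => (hoff j hj).symm⟩⟩
    · intro he
      apply e
      have := congrFun he i
      simpa using this.symm
    · intro j hj
      have hji : j = i := by
        by_contra hne
        exact hj (hoff j hne).symm
      subst hji
      rw [payoff_eq, payoff_eq]
      have : cnt adj (Function.update s j c) j c = cnt adj s j c := by
        apply cnt_congr
        intro l hl
        apply hoff
        rintro rfl
        exact no_loop hpc _ hl
      simp only [Function.update_self, this]
      exact_mod_cast (h2 e).1

lemma sweep_aux (hpc : PC n k adj) (C : Fin n → Finset M) (s : Fin n → M) (hs : Valid C s) :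
    ∀ m, m ≤ n → ∃ s', Valid C s' ∧ (∃ L ≤ m, Reach adj C s s' L) ∧
      (∀ j : Fin n, m ≤ j.val → s' j = s j) ∧
      (∀ i : Fin n, i.val < m → ∀ u : Fin n → M, (∀ j, j < i → u j = s' j) →
        (∀ j, i ≤ j → u j = s j) →
        (∀ c' ∈ C i, cnt adj u i c' ≤ cnt adj u i (s' i)) ∧
        (s' i ≠ s i → cnt adj u i (s i) < cnt adj u i (s' i) ∧
        ∀ c' ∈ C i, tc k adj u i c' ≤ tc k adj u i (s' i))) := by
  intro m
  induction m with
  | zero =>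
    intro _
    exact ⟨s, hs, ⟨0, le_rfl, Reach.refl s⟩, fun _ _ => rfl, fun i hi => absurd hi (Nat.not_lt_zero _)⟩
  | succ m ih =>
    intro hm
    obtain ⟨t, htv, ⟨L, hL, hR⟩, hoff, hin⟩ := ih (by omega)
    obtain ⟨s', hv, ⟨L', hL', hR'⟩, hoff', h1, h2⟩ := step hpc C t htv ⟨m, by omega⟩
    refine ⟨s', hv, ⟨L + L', by omega, hR.trans hR'⟩, ?_, ?_⟩
    · intro j hj
      rw [hoff' j (by intro h; rw [h] at hj; simp at hj), hoff j (by omega)]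
    · intro i hi u hu1 hu2
      by_cases him : i.val = m
      · have e : i = ⟨m, by omega⟩ := Fin.ext him
        have hut : u = t := by
          funext j
          rcases lt_or_ge j i with h | h
          · rw [hu1 j h, hoff' j (by rw [← e]; exact h.ne)]
          · rw [hu2 j h, hoff j (by rw [← him]; exact h)]
        rw [hut]
        have hti : t i = s i := hoff i (by omega)
        rw [← hti, e]
        exact ⟨h1, h2⟩
      · have hs'i : ∀ j : Fin n, j.val < m → s' j = t j := fun j hj =>
          hoff' j (by rintro rfl; simp at hj)
        rw [hs'i i (by omega)]
        refine hin i (by omega) u (fun j hj => ?_) hu2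
        rw [hu1 j hj, hs'i j (by have := Fin.lt_def.1 hj; omega)]

structure Sweep (k : ℕ) (adj : Fin n → Fin n → Prop) (C : Fin n → Finset M)
    (s s' : Fin n → M) : Prop where
  v : Valid C s'
  path : ∃ L ≤ n, Reach adj C s s' L
  zero : ∀ i : Fin n, i.val = 0 → ∀ c ∈ C i, cnt adj s i c ≤ cnt adj s i (s' i)
  zero' : ∀ i : Fin n, i.val = 0 → s' i ≠ s i → cnt adj s i (s i) < cnt adj s i (s' i)
  st : ∀ i : Fin n, 1 ≤ i.val → ∀ c ∈ C i, cnt adj s' i c ≤ cnt adj s' i (s' i)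
  imp : ∀ i : Fin n, 1 ≤ i.val → s' i ≠ s i → cnt adj s' i (s i) < cnt adj s' i (s' i)
  anc : ∀ i : Fin n, 1 ≤ i.val → s' i ≠ s i → ∀ c ∈ C i, tc k adj s' i c ≤ tc k adj s' i (s' i)

lemma sweep (hpc : PC n k adj) (C : Fin n → Finset M) (s : Fin n → M) (hs : Valid C s) :
    ∃ s', Sweep k adj C s s' := by
  obtain ⟨s', hv, hp, -, h⟩ := sweep_aux hpc C s hs n le_rfl
  have hz : ∀ i : Fin n, i.val = 0 → _ := fun i hi => h i i.isLt s
    (fun j hj => by have := Fin.lt_def.1 hj; omega) (fun _ _ => rfl)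
  have hp' : ∀ i : Fin n, 1 ≤ i.val → (∀ c' ∈ C i, cnt adj s' i c' ≤ cnt adj s' i (s' i)) ∧
        (s' i ≠ s i → cnt adj s' i (s i) < cnt adj s' i (s' i) ∧
        ∀ c' ∈ C i, tc k adj s' i c' ≤ tc k adj s' i (s' i)) := by
    intro i hi
    have := h i i.isLt (fun j => if j < i then s' j else s j)
      (fun j hj => by simp [hj]) (fun j hj => by simp [not_lt.2 hj])
    have e : ∀ j, adj j i → (fun j => if j < i then s' j else s j) j = s' j := by
      intro j hj
      simp [hpc.lt j i hj hi]
    simp only [cnt_congr _ e, tc_congr _ e] at this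
    exact this
  exact ⟨s', hv, hp, fun i hi => (hz i hi).1, fun i hi hne => ((hz i hi).2 hne).1,
    fun i hi => (hp' i hi).1, fun i hi hne => ((hp' i hi).2 hne).1,
    fun i hi hne => ((hp' i hi).2 hne).2⟩

lemma nash_of (hpc : PC n k adj) (C : Fin n → Finset M) (s : Fin n → M) (hs : Valid C s)
    (h : ∀ i, ∀ c ∈ C i, cnt adj s i c ≤ cnt adj s i (s i)) :
    IsNash adj (fun _ _ => 1) (fun _ _ => 0) C s := by
  refine ⟨hs, ?_⟩
  rintro s' ⟨⟨hv, hne, hp⟩, i, hi⟩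
  have hsi : s i ≠ s' i := by
    intro e
    apply hne
    funext j
    by_cases hj : j = i
    · rw [hj, e]
    · exact hi j hj
  have h1 := hp i hsi
  rw [payoff_eq, payoff_eq] at h1
  have h2 : cnt adj s i (s' i) = cnt adj s' i (s' i) := by
    apply cnt_congr
    intro l hl
    apply hi
    rintro rfl
    exact no_loop hpc _ hl
  rw [← h2] at h1
  have h3 := h i _ (hv i)
  have h4 : cnt adj s i (s i) < cnt adj s i (s' i) := by exact_mod_cast h1
  omega

lemma nash_sweep (hpc : PC n k adj) (C : Fin n → Finset M) (s s' : Fin n → M)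
    (h : Sweep k adj C s s') (l : Fin n) (hl : l.val = n - 1) (e : s' l = s l) :
    IsNash adj (fun _ _ => 1) (fun _ _ => 0) C s' := by
  refine nash_of hpc C s' h.v ?_
  intro i c hc
  by_cases hi : i.val = 0
  · have e' : ∀ j, adj j i → s j = s' j := by
      intro j hj
      have : j = l := Fin.ext (by rw [hpc.z j i hj hi, hl])
      rw [this, e]
    rw [← cnt_congr _ e', ← cnt_congr _ e']
    exact h.zero i hi c hc
  · exact h.st i (by omega) c hc

structure Inv (k : ℕ) (adj : Fin n → Fin n → Prop) (C : Fin n → Finset M)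
    (s : Fin n → M) (y : M) (q : ℕ) : Prop where
  v : Valid C s
  st : ∀ i : Fin n, 1 ≤ i.val → ∀ c ∈ C i, cnt adj s i c ≤ cnt adj s i (s i)
  kq : k ≤ q
  qn : q < n
  col : ∀ i : Fin n, q ≤ i.val → s i = y
  anc : ∀ i : Fin n, q ≤ i.val → ∀ c ∈ C i, tc k adj s i c ≤ tc k adj s i y

lemma round (hpc : PC n k adj) (C : Fin n → Finset M) (s s' : Fin n → M) (y : M) (q : ℕ)
    (hI : Inv k adj C s y q) (h : Sweep k adj C s s') (l : Fin n) (hl : l.val = n - 1)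
    (hne : s' l ≠ y) : k < q ∧ Inv k adj C s' (s' l) (q - 1) := by
  have k1 := hpc.k1
  have kq := hI.kq
  have qn := hI.qn
  have hly : s l = y := hI.col l (by omega)
  have htop : ∀ m, ∀ i : Fin n, i.val = m → m < k → s' i = s i ∨ s' i = y := by
    intro m
    induction m with
    | zero =>
      intro i hi _
      by_contra hcon
      push Not at hcon
      have h1 := h.zero' i hi hcon.1
      obtain ⟨j, hj, e⟩ := cnt_pos (lt_of_le_of_lt (Nat.zero_le _) h1)
      have : j = l := Fin.ext (by rw [hpc.z j i hj hi, hl])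
      rw [this, hly] at e
      exact hcon.2 e.symm
    | succ m ih =>
      intro i hi hm
      by_contra hcon
      push Not at hcon
      have h1 := h.imp i (by omega) hcon.1
      obtain ⟨j, hj, e⟩ := cnt_pos (lt_of_le_of_lt (Nat.zero_le _) h1)
      have hji := hpc.top j i hj (by omega) (by omega)
      rcases ih j (by omega) (by omega) with h2 | h2
      · have e' : ∀ j, adj j i → s' j = s j := by
          intro j' hj'
          have := hpc.top j' i hj' (by omega) (by omega)
          have : j' = j := Fin.ext (by omega)
          rw [this, h2]
        rw [cnt_congr _ e', cnt_congr _ e'] at h1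
        have := hI.st i (by omega) _ (h.v i)
        omega
      · exact hcon.2 (e.symm.trans h2)
  replace htop : ∀ i : Fin n, i.val < k → s' i = s i ∨ s' i = y := fun i hi => htop _ i rfl hi
  have h3 : ∀ i : Fin n, q ≤ i.val → ∀ c ∈ C i, tc k adj s' i c ≤ tc k adj s' i y := by
    intro i hi c hc
    by_cases hcy : c = y
    · rw [hcy]
    · refine le_trans (tc_mono (s' := s) ?_) ((hI.anc i hi c hc).trans (tc_mono ?_))
      · intro j _ hj e
        rcases htop j hj with h | h
        · rw [← h, e]
        · exact absurd (e.symm.trans h) hcy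
      · intro j _ hj e
        rcases htop j hj with h | h
        · rw [h, e]
        · exact h
  have h4 : ∀ i : Fin n, q ≤ i.val → s' i ≠ y →
      ∃ j, adj j i ∧ j.val + 1 = i.val ∧ k ≤ j.val ∧ s' j = s' i := by
    intro i hi hy
    have hsi := hI.col i hi
    have h5 := h.imp i (by omega) (by rw [hsi]; exact hy)
    rw [hsi] at h5
    by_contra hcon
    push Not at hcon
    have h6 := cnt_le_tc (k := k) (adj := adj) s' i (s' i) (fun j hj hk =>
      hcon j hj (hpc.bot j i hj (by omega) hk) hk)
    have h7 := h3 i hi _ (h.v i)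
    have h8 := tc_le_cnt (k := k) (adj := adj) s' i y
    omega
  have h5 : ∀ d, ∀ i : Fin n, i.val + d = n - 1 → q ≤ i.val + 1 → s' i = s' l ∧ k ≤ i.val := by
    intro d
    induction d with
    | zero =>
      intro i hi _
      have : i = l := Fin.ext (by omega)
      rw [this]
      exact ⟨rfl, by omega⟩
    | succ d ih =>
      intro i hi hq
      obtain ⟨e, _⟩ := ih ⟨i.val + 1, by omega⟩ (by simp only; omega) (by simp only; omega)
      obtain ⟨j, _, hj, hk, e'⟩ := h4 ⟨i.val + 1, by omega⟩ hq (by rw [e]; exact hne)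
      have : j = i := Fin.ext (by simp only at hj; omega)
      subst this
      exact ⟨e'.trans e, hk⟩
  have h6 : ∀ i : Fin n, q ≤ i.val + 1 → s' i = s' l ∧ k ≤ i.val := fun i hi =>
    h5 (n - 1 - i.val) i (by have := i.isLt; omega) hi
  have hkq : k < q := by
    have := (h6 ⟨q - 1, by omega⟩ (by simp only; omega)).2
    simp only at this
    omega
  refine ⟨hkq, h.v, h.st, by omega, by omega, fun i hi => (h6 i (by omega)).1, ?_⟩
  intro i hi c hc
  obtain ⟨e, hk⟩ := h6 i (by omega)
  rw [← e]
  refine h.anc i (by omega) ?_ c hc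
  by_cases hqi : q ≤ i.val
  · rw [e, hI.col i hqi]; exact hne
  · intro hsame
    have hiq : i.val + 1 = q := by omega
    let p : Fin n := ⟨q, qn⟩
    have hp : p.val = q := rfl
    have hsp : s p = y := hI.col p le_rfl
    have hs'p := (h6 p (by omega)).1
    have a1 := h.imp p (by omega) (by rw [hsp, hs'p]; exact hne)
    rw [hsp, hs'p] at a1
    have a2 : cnt adj s' p (s' l) ≤ cnt adj s p (s' l) := by
      apply cnt_mono
      intro j hj ej
      rcases lt_or_ge j.val k with hjk | hjk
      · rcases htop j hjk with h | h
        · rw [← h, ej]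
        · exact absurd (ej.symm.trans h) hne
      · have := hpc.bot j p hj (by omega) hjk
        have : j = i := Fin.ext (by omega)
        rw [this, ← hsame, e]
    have a3 : cnt adj s p y ≤ cnt adj s' p y := by
      apply cnt_mono
      intro j hj ej
      rcases lt_or_ge j.val k with hjk | hjk
      · rcases htop j hjk with h | h
        · rw [h, ej]
        · exact h
      · have := hpc.bot j p hj (by omega) hjk
        have : j = i := Fin.ext (by omega)
        rw [this, ← hsame, e] at ej
        exact absurd ej hne
    have a4 := hI.st p (by omega) (s' l) (hs'p ▸ h.v p)
    rw [hsp] at a4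
    omega

lemma iter (hpc : PC n k adj) (C : Fin n → Finset M) : ∀ d, ∀ (s : Fin n → M) (y : M),
    Inv k adj C s y (k + d) → ∃ L ≤ (d + 1) * n, ∃ s', Reach adj C s s' L ∧
      IsNash adj (fun _ _ => 1) (fun _ _ => 0) C s' := by
  have kn := hpc.kn
  intro d
  induction d with
  | zero =>
    intro s y hI
    obtain ⟨s', h⟩ := sweep hpc C s hI.v
    obtain ⟨L, hL, hR⟩ := h.path
    refine ⟨L, by omega, s', hR, nash_sweep hpc C s s' h ⟨n - 1, by omega⟩ rfl ?_⟩
    rw [hI.col _ (by simp only; omega)]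
    by_contra hne
    have := (round hpc C s s' y _ hI h _ rfl hne).1
    omega
  | succ d ih =>
    intro s y hI
    obtain ⟨s', h⟩ := sweep hpc C s hI.v
    obtain ⟨L, hL, hR⟩ := h.path
    by_cases hne : s' ⟨n - 1, by omega⟩ = y
    · refine ⟨L, by nlinarith, s', hR, nash_sweep hpc C s s' h ⟨n - 1, by omega⟩ rfl ?_⟩
      have := hI.qn
      rw [hI.col _ (by simp only; omega)]
      exact hne
    · have hI' := (round hpc C s s' y _ hI h _ rfl hne).2
      obtain ⟨L', hL', s'', hR', hN⟩ := ih s' _ hI'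
      exact ⟨L + L', by nlinarith, s'', hR.trans hR', hN⟩

lemma main_aux (hpc : PC n k adj) (C : Fin n → Finset M) (s : Fin n → M) (hs : Valid C s) :
    ∃ L ≤ 2 * n * (n - k), ∃ s', Reach adj C s s' L ∧
      IsNash adj (fun _ _ => 1) (fun _ _ => 0) C s' := by
  have kn := hpc.kn
  have k1 := hpc.k1
  obtain ⟨s', h⟩ := sweep hpc C s hs
  obtain ⟨L, hL, hR⟩ := h.path
  obtain ⟨d, hd⟩ : ∃ d, n = k + d + 1 := ⟨n - k - 1, by omega⟩
  have hnk : n - k = d + 1 := by omega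
  rw [hnk]
  by_cases hne : s' ⟨n - 1, by omega⟩ = s ⟨n - 1, by omega⟩
  · exact ⟨L, by nlinarith, s', hR, nash_sweep hpc C s s' h ⟨n - 1, by omega⟩ rfl hne⟩
  · have hI : Inv k adj C s' (s' ⟨n - 1, by omega⟩) (k + d) := by
      have hi : ∀ i : Fin n, k + d ≤ i.val → i = ⟨n - 1, by omega⟩ := fun i hi =>
        Fin.ext (by have := i.isLt; simp only; omega)
      refine ⟨h.v, h.st, by omega, by omega, fun i h' => by rw [← hi i h'], ?_⟩
      intro i h'
      have e := hi i h'
      rw [← e] at hne ⊢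
      exact h.anc i (by omega) hne
    obtain ⟨L', hL', s'', hR', hN⟩ := iter hpc C d s' _ hI
    exact ⟨L + L', by nlinarith, s'', hR.trans hR', hN⟩

end

/-- There is a constant `c` such that every coordination game without bonuses
on an unweighted partition-cycle on `n` nodes with top part of size `k`
admits, from every joint strategy, a finite improvement path of length at most
`c * n * (n - k)` ending in a Nash equilibrium. -/
theorem partition_cycle_improvement_path :
    ∃ c : ℕ,
      ∀ (n k : ℕ) (Ep : Finset (Fin n × Fin n)),
        IsPartitionCycle n k Ep →
      ∀ (M : Type) [Fintype M],
      ∀ (C : Fin n → Finset M), (∀ i, (C i).Nonempty) →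
      ∀ s : Fin n → M, Valid C s →
        ∃ L, L ≤ c * n * (n - k) ∧
          ImpPath (pcAdj n Ep) (fun _ _ => 1) (fun _ _ => 0) C s L := by
  refine ⟨2, ?_⟩
  intro n k Ep hE M _ C _ s hs
  obtain ⟨L, hL, s', hR, hN⟩ := main_aux (pc_of hE) C s hs
  obtain ⟨σ, h0, h1, hσ⟩ := hR.path
  exact ⟨L, hL, σ, h0, hσ, h1 ▸ hN⟩

end CG
end

section
/- There is a constant c (independent of the game) such that every coordination game with arbitrary bonuses on an unweighted partition-cycle on n nodes with top part of size k admits, from every joint strategy, a finite improvement path of length at most c·k·n·(n−k) (hence ending in a Nash equilibrium). -/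
open scoped Classical

namespace CG

noncomputable def Good {n : ℕ} {M : Type} (Ep : Finset (Fin n × Fin n)) (β : Fin n → M → ℕ)
    (C : Fin n → Finset M) (N : ℕ) (s : Fin n → M) : Prop :=
  ∃ L, L ≤ N ∧ ImpPath (pcAdj n Ep) (fun _ _ => 1) β C s L

lemma Good.cons {n : ℕ} {M : Type} {Ep : Finset (Fin n × Fin n)} {β : Fin n → M → ℕ}
    {C : Fin n → Finset M} {N : ℕ} {s s' : Fin n → M}
    (h : UniDev (pcAdj n Ep) (fun _ _ => 1) β C s s') (h' : Good Ep β C N s') :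
    Good Ep β C (N + 1) s := by
  obtain ⟨L, hL, σ, h0, hs, hN⟩ := h'
  refine ⟨L + 1, by omega, fun t => match t with | 0 => s | t + 1 => σ t, rfl, ?_, hN⟩
  intro t ht
  cases t with
  | zero => simpa [h0] using h
  | succ t => exact hs t (by omega)

lemma Good.mono {n : ℕ} {M : Type} {Ep : Finset (Fin n × Fin n)} {β : Fin n → M → ℕ}
    {C : Fin n → Finset M} {N N' : ℕ} {s : Fin n → M}
    (h : Good Ep β C N s) (hN : N ≤ N') : Good Ep β C N' s := by
  obtain ⟨L, hL, h⟩ := h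
  exact ⟨L, hL.trans hN, h⟩

/-- effective bonus -/
noncomputable def Bn {n : ℕ} {M : Type} (Ep : Finset (Fin n × Fin n)) (β : Fin n → M → ℕ)
    (s : Fin n → M) (i : Fin n) (c : M) : ℕ :=
  (Finset.univ.filter (fun j => (j, i) ∈ Ep ∧ s j = c)).card + β i c

/-- cyclic predecessor -/
def pr {n : ℕ} (i : Fin n) : Fin n :=
  if h : i.val = 0 then ⟨n - 1, by have := i.isLt; omega⟩ else ⟨i.val - 1, by have := i.isLt; omega⟩

noncomputable def ind {M : Type} (a b : M) : ℕ := if a = b then 1 else 0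

lemma pr_iff {n : ℕ} (i j : Fin n) : (j.val + 1) % n = i.val ↔ j = pr i := by
  have hi := i.isLt
  have hj := j.isLt
  unfold pr
  split_ifs with h
  · rw [Fin.ext_iff, h]
    constructor
    · intro h1
      by_contra h2
      have h2 : ¬ (j.val = n - 1) := h2
      rw [Nat.mod_eq_of_lt (by omega)] at h1
      omega
    · intro h1
      have h1 : j.val = n - 1 := h1
      rw [h1, show n - 1 + 1 = n by omega, Nat.mod_self]
  · rw [Fin.ext_iff]
    constructor
    · intro h1
      by_cases h2 : j.val + 1 = n
      · rw [h2, Nat.mod_self] at h1; omega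
      · rw [Nat.mod_eq_of_lt (by omega)] at h1
        show j.val = i.val - 1
        omega
    · intro h1
      have h1 : j.val = i.val - 1 := h1
      rw [Nat.mod_eq_of_lt (by omega)]
      omega

lemma payoff_eq_s14 {n k : ℕ} {M : Type} {Ep : Finset (Fin n × Fin n)} (hp : IsPartitionCycle n k Ep)
    (β : Fin n → M → ℕ) (s : Fin n → M) (i : Fin n) :
    payoff (pcAdj n Ep) (fun _ _ => 1) β s i
      = ((Bn Ep β s i (s i) + ind (s (pr i)) (s i) : ℕ) : ℝ) := by
  unfold payoff Bn ind
  have : (Finset.univ.filter (fun j => pcAdj n Ep j i ∧ s j = s i))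
      = (Finset.univ.filter (fun j => (j, i) ∈ Ep ∧ s j = s i)) ∪
        (if s (pr i) = s i then {pr i} else ∅) := by
    ext j
    have := pr_iff i j
    rw [Finset.mem_union, Finset.mem_filter, Finset.mem_filter]
    simp only [Finset.mem_univ, true_and]
    unfold pcAdj
    rw [this]
    split_ifs with h
    · simp only [Finset.mem_singleton]
      constructor
      · rintro ⟨h1 | h1, h2⟩ <;> tauto
      · rintro (h1 | h1)
        · tauto
        · subst h1; tauto
    · simp only [Finset.notMem_empty, or_false]
      constructor
      · rintro ⟨h1 | h1, h2⟩
        · subst h1; tauto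
        · tauto
      · tauto
  rw [this, Finset.sum_const, Finset.card_union_of_disjoint]
  · split_ifs <;> simp <;> ring
  · rw [Finset.disjoint_left]
    intro j hj hj2
    simp only [Finset.mem_filter, Finset.mem_univ, true_and] at hj
    split_ifs at hj2 with h
    · simp only [Finset.mem_singleton] at hj2
      exact hp.2.2.2 _ hj.1 ((pr_iff i j).2 hj2)
    · simp at hj2

/-- specification of one update -/
def Spec {M : Type} (B : M → ℕ) (p : M) (C : Finset M) (x y : M) : Prop :=
  (∀ z ∈ C, B z + ind p z ≤ B y + ind p y) ∧
  (y ≠ x → B x + ind p x < B y + ind p y ∧ (∀ z ∈ C, B z ≤ B y)) ∧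
  (y ≠ x → (∀ z ∈ C, B z ≤ B x) → y = p)

lemma ind_self {M : Type} (a : M) : ind a a = 1 := by simp [ind]
lemma ind_ne {M : Type} {a b : M} (h : a ≠ b) : ind a b = 0 := by simp [ind, h]
lemma ind_le {M : Type} (a b : M) : ind a b ≤ 1 := by unfold ind; split_ifs <;> simp

lemma exists_spec {M : Type} (B : M → ℕ) (p : M) (C : Finset M) (x : M) (hx : x ∈ C) :
    ∃ y ∈ C, Spec B p C x y := by
  by_cases hb : ∀ z ∈ C, B z + ind p z ≤ B x + ind p x
  · exact ⟨x, hx, hb, fun h => absurd rfl h, fun h => absurd rfl h⟩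
  push Not at hb
  obtain ⟨z0, hz0, hlt⟩ := hb
  by_cases hpA : p ∈ C ∧ ∀ z ∈ C, B z ≤ B p
  · have key : ∀ z ∈ C, B z + ind p z ≤ B p + ind p p := by
      intro z hz
      have := hpA.2 z hz
      have := ind_le p z
      rw [ind_self]; omega
    exact ⟨p, hpA.1, key, fun _ => ⟨hlt.trans_le (key _ hz0), hpA.2⟩, fun _ _ => rfl⟩
  · obtain ⟨a, ha, hmax⟩ := C.exists_max_image B ⟨x, hx⟩
    have key : ∀ z ∈ C, B z + ind p z ≤ B a := by
      intro z hz
      by_cases hzp : p = z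
      · subst hzp
        rw [ind_self]
        by_contra hcon
        exact hpA ⟨hz, fun w hw => (hmax w hw).trans (by omega)⟩
      · rw [ind_ne hzp]; exact hmax z hz
    refine ⟨a, ha, fun z hz => (key z hz).trans (by omega), fun _ => ⟨?_, hmax⟩, fun _ hxm => ?_⟩
    · have := key _ hz0; omega
    · have := key _ hz0
      have := hxm a ha
      omega

lemma Bn_congr {n : ℕ} {M : Type} {Ep : Finset (Fin n × Fin n)} {β : Fin n → M → ℕ}
    {s s' : Fin n → M} {i : Fin n} (h : ∀ j, (j, i) ∈ Ep → s j = s' j) (c : M) :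
    Bn Ep β s i c = Bn Ep β s' i c := by
  unfold Bn
  congr 2
  ext j
  simp only [Finset.mem_filter, Finset.mem_univ, true_and]
  constructor
  · rintro ⟨h1, h2⟩; exact ⟨h1, (h j h1) ▸ h2⟩
  · rintro ⟨h1, h2⟩; exact ⟨h1, (h j h1).symm ▸ h2⟩

lemma pr_ne {n : ℕ} (hn : 2 ≤ n) (i : Fin n) : pr i ≠ i := by
  unfold pr
  have := i.isLt
  split_ifs with h
  · rw [Ne, Fin.ext_iff]; show ¬ (n - 1 = i.val); omega
  · rw [Ne, Fin.ext_iff]; show ¬ (i.val - 1 = i.val); omega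

lemma pr_val {n : ℕ} (i : Fin n) (h : i.val ≠ 0) : (pr i).val = i.val - 1 := by
  unfold pr; simp [h]

lemma pr_val0 {n : ℕ} (i : Fin n) (h : i.val = 0) : (pr i).val = n - 1 := by
  unfold pr; simp [h]

def Best {n : ℕ} {M : Type} (Ep : Finset (Fin n × Fin n)) (β : Fin n → M → ℕ)
    (C : Fin n → Finset M) (s : Fin n → M) (i : Fin n) : Prop :=
  ∀ z ∈ C i, Bn Ep β s i z + ind (s (pr i)) z ≤ Bn Ep β s i (s i) + ind (s (pr i)) (s i)

lemma payoff_dev {n k : ℕ} {M : Type} {Ep : Finset (Fin n × Fin n)} (hp : IsPartitionCycle n k Ep)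
    (β : Fin n → M → ℕ) (s s' : Fin n → M) (i : Fin n) (h : ∀ j, j ≠ i → s j = s' j) :
    payoff (pcAdj n Ep) (fun _ _ => 1) β s' i
      = ((Bn Ep β s i (s' i) + ind (s (pr i)) (s' i) : ℕ) : ℝ) := by
  have h1 := hp.1
  have h2 := hp.2.1
  rw [payoff_eq_s14 hp, ← h _ (pr_ne (by omega) i)]
  rw [Bn_congr (s := s) (s' := s')]
  intro j hj
  apply h
  rintro rfl
  have := hp.2.2.1 _ hj
  simp only at this
  omega

lemma nash_of_best {n k : ℕ} {M : Type} {Ep : Finset (Fin n × Fin n)}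
    (hp : IsPartitionCycle n k Ep) (β : Fin n → M → ℕ) (C : Fin n → Finset M) (s : Fin n → M)
    (hv : Valid C s) (hb : ∀ i, Best Ep β C s i) : Good Ep β C 0 s := by
  refine ⟨0, le_rfl, fun _ => s, rfl, fun t ht => absurd ht (by omega), hv, ?_⟩
  rintro s' ⟨⟨hv', hne, himp⟩, i, hi⟩
  have hsi : s i ≠ s' i := by
    intro h
    apply hne
    funext j
    by_cases hj : j = i
    · subst hj; exact h
    · exact hi j hj
  have := himp i hsi
  rw [payoff_eq_s14 hp, payoff_dev hp β s s' i hi, Nat.cast_lt] at this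
  have h2 := hb i (s' i) (hv' i)
  exact absurd this (not_lt.2 h2)

/-- colour in the argmax of the effective bonus -/
def InA {n : ℕ} {M : Type} (Ep : Finset (Fin n × Fin n)) (β : Fin n → M → ℕ)
    (C : Fin n → Finset M) (s : Fin n → M) (i : Fin n) (c : M) : Prop :=
  ∀ z ∈ C i, Bn Ep β s i z ≤ Bn Ep β s i c

lemma round_aux {n k : ℕ} {M : Type} {Ep : Finset (Fin n × Fin n)}
    (hp : IsPartitionCycle n k Ep) (β : Fin n → M → ℕ) (C : Fin n → Finset M) (s : Fin n → M)
    (hv : Valid C s) (m : ℕ) (hm : m ≤ n) :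
    ∃ s', Valid C s' ∧ (∀ N, Good Ep β C N s' → Good Ep β C (N + m) s) ∧
      (∀ j : Fin n, m ≤ j.val → s' j = s j) ∧
      ∀ i : Fin n, i.val < m →
        Spec (Bn Ep β s' i) (if i.val = 0 then s (pr i) else s' (pr i)) (C i) (s i) (s' i) := by
  have hk1 := hp.1
  have hk2 := hp.2.1
  induction m with
  | zero => exact ⟨s, hv, fun N h => h, fun _ _ => rfl, fun i hi => absurd hi (by omega)⟩
  | succ m ih =>
    obtain ⟨s', hv', hr, hsame, hspec⟩ := ih (by omega)
    let i0 : Fin n := ⟨m, by omega⟩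
    obtain ⟨y, hy, hys⟩ := exists_spec (Bn Ep β s' i0) (s' (pr i0)) (C i0) (s' i0) (hv' i0)
    have hoff : ∀ j, j ≠ i0 → s' j = Function.update s' i0 y j := by
      intro j hj; rw [Function.update_of_ne hj]
    have hBn : ∀ i : Fin n, i.val ≤ m → Bn Ep β (Function.update s' i0 y) i = Bn Ep β s' i := by
      intro i hi
      funext c
      apply Bn_congr
      intro j hj
      have := hp.2.2.1 _ hj
      simp only at this
      refine (hoff j ?_).symm
      rw [Ne, Fin.ext_iff]
      show ¬ (j.val = m)
      omega
    have hv'' : Valid C (Function.update s' i0 y) := by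
      intro j
      by_cases hj : j = i0
      · subst hj; simpa using hy
      · rw [← hoff j hj]; exact hv' j
    refine ⟨Function.update s' i0 y, hv'', ?_, ?_, ?_⟩
    · intro N hN
      by_cases hyx : y = s' i0
      · rw [hyx, Function.update_eq_self] at hN
        exact (hr N hN).mono (by omega)
      · have hu : UniDev (pcAdj n Ep) (fun _ _ => 1) β C s' (Function.update s' i0 y) := by
          refine ⟨⟨hv'', ?_, ?_⟩, i0, hoff⟩
          · intro h
            apply hyx
            have := congrFun h i0
            simpa using this.symm
          · intro i hi
            have : i = i0 := by
              by_contra hne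
              exact hi (hoff i hne)
            subst this
            rw [payoff_eq_s14 hp, payoff_dev hp β s' _ i0 hoff, Nat.cast_lt]
            simpa using (hys.2.1 hyx).1
        exact (hr _ (hN.cons hu)).mono (by omega)
    · intro j hj
      rw [← hoff j, hsame j (by omega)]
      rw [Ne, Fin.ext_iff]
      show ¬ (j.val = m)
      omega
    · intro i hi
      rw [hBn i (by omega)]
      have hpr : i.val ≠ 0 → Function.update s' i0 y (pr i) = s' (pr i) := by
        intro h
        refine (hoff _ ?_).symm
        rw [Ne, Fin.ext_iff, pr_val i h]
        show ¬ (i.val - 1 = m)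
        omega
      by_cases him : i = i0
      · subst him
        rw [Function.update_self, ← hsame i0 le_rfl]
        have : (if i0.val = 0 then s (pr i0) else Function.update s' i0 y (pr i0)) = s' (pr i0) := by
          split_ifs with h0
          · refine (hsame _ ?_).symm
            rw [pr_val0 i0 h0]
            omega
          · exact hpr h0
        rw [this]
        exact hys
      · have h1 : i.val < m := by
          have : ¬ (i.val = m) := fun h => him (Fin.ext h)
          omega
        rw [← hoff i him]
        have := hspec i h1
        split_ifs at this ⊢ with h0
        · exact this
        · rw [hpr h0]; exact this

lemma round_s14 {n k : ℕ} {M : Type} {Ep : Finset (Fin n × Fin n)}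
    (hp : IsPartitionCycle n k Ep) (β : Fin n → M → ℕ) (C : Fin n → Finset M) (s : Fin n → M)
    (hv : Valid C s) :
    ∃ s', Valid C s' ∧ (∀ N, Good Ep β C N s' → Good Ep β C (N + n) s) ∧
      ∀ i : Fin n,
        Spec (Bn Ep β s' i) (if i.val = 0 then s (pr i) else s' (pr i)) (C i) (s i) (s' i) := by
  obtain ⟨s', h1, h2, -, h4⟩ := round_aux hp β C s hv n le_rfl
  exact ⟨s', h1, h2, fun i => h4 i i.isLt⟩

lemma Bn_top {n k : ℕ} {M : Type} {Ep : Finset (Fin n × Fin n)}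
    (hp : IsPartitionCycle n k Ep) (β : Fin n → M → ℕ) (s s' : Fin n → M) (i : Fin n)
    (hi : i.val < k) : Bn Ep β s i = Bn Ep β s' i := by
  funext c
  apply Bn_congr
  intro j hj
  have := hp.2.2.1 _ hj
  simp only at this
  omega

/-- top nodes whose colour is not of maximal bonus -/
noncomputable def Dset {n : ℕ} {M : Type} (k : ℕ) (Ep : Finset (Fin n × Fin n))
    (β : Fin n → M → ℕ) (C : Fin n → Finset M) (s : Fin n → M) : Finset (Fin n) :=
  Finset.univ.filter (fun i => i.val < k ∧ ¬ InA Ep β C s i (s i))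

lemma round_last {n k : ℕ} {M : Type} {Ep : Finset (Fin n × Fin n)}
    (hp : IsPartitionCycle n k Ep) (β : Fin n → M → ℕ) (C : Fin n → Finset M) (s s' : Fin n → M)
    (hv' : Valid C s') (l : Fin n) (hl : l.val = n - 1)
    (hs : ∀ i : Fin n,
        Spec (Bn Ep β s' i) (if i.val = 0 then s (pr i) else s' (pr i)) (C i) (s i) (s' i))
    (h : s' l = s l) : Good Ep β C 0 s' := by
  apply nash_of_best hp β C s' hv'
  intro i
  have := (hs i).1
  split_ifs at this with h0
  · have hpl : pr i = l := Fin.ext (by rw [pr_val0 i h0, hl])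
    rw [hpl, ← h] at this
    unfold Best
    rw [hpl]
    exact this
  · exact this

lemma Dset_sub {n k : ℕ} {M : Type} {Ep : Finset (Fin n × Fin n)}
    (hp : IsPartitionCycle n k Ep) (β : Fin n → M → ℕ) (C : Fin n → Finset M) (s s' : Fin n → M)
    (hs : ∀ i : Fin n,
        Spec (Bn Ep β s' i) (if i.val = 0 then s (pr i) else s' (pr i)) (C i) (s i) (s' i)) :
    Dset k Ep β C s' ⊆ Dset k Ep β C s := by
  intro i
  simp only [Dset, Finset.mem_filter, Finset.mem_univ, true_and]
  rintro ⟨h1, h2⟩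
  refine ⟨h1, fun h3 => h2 ?_⟩
  by_cases h : s' i = s i
  · unfold InA at *
    rw [h, Bn_top hp β s' s i h1]; exact h3
  · exact ((hs i).2.1 h).2

lemma good_step {n k : ℕ} {M : Type} {Ep : Finset (Fin n × Fin n)}
    (hp : IsPartitionCycle n k Ep) (β : Fin n → M → ℕ) (C : Fin n → Finset M) (s s' : Fin n → M)
    (hv : Valid C s) (hv' : Valid C s') (l : Fin n) (hl : l.val = n - 1)
    (hs : ∀ i : Fin n,
        Spec (Bn Ep β s' i) (if i.val = 0 then s (pr i) else s' (pr i)) (C i) (s i) (s' i))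
    (hbest : ∀ i : Fin n, i.val ≠ 0 → Best Ep β C s i)
    (b : ℕ) (hkb : k ≤ b) (hbn : b < n)
    (hQ : ∀ i : Fin n, b ≤ i.val → s i = s l ∧ InA Ep β C s i (s i))
    (hD : Dset k Ep β C s' = Dset k Ep β C s) (h : s' l ≠ s l) :
    k ≤ b - 1 ∧ b - 1 < b ∧
      ∀ i : Fin n, b - 1 ≤ i.val → s' i = s' l ∧ InA Ep β C s' i (s' i) := by
  have hk1 := hp.1
  have htop : ∀ m : ℕ, ∀ i : Fin n, i.val = m → m < k → s' i = s i ∨ s' i = s l := by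
    intro m
    induction m with
    | zero =>
      intro i hi hmk
      by_cases hc : s' i = s i
      · exact Or.inl hc
      right
      have hA : InA Ep β C s i (s i) := by
        by_contra hA
        have h1 : i ∈ Dset k Ep β C s := by
          simp only [Dset, Finset.mem_filter, Finset.mem_univ, true_and]
          exact ⟨by omega, hA⟩
        rw [← hD] at h1
        simp only [Dset, Finset.mem_filter, Finset.mem_univ, true_and] at h1
        exact h1.2 ((hs i).2.1 hc).2
      have := (hs i).2.2 hc (by rw [Bn_top hp β s' s i (by omega)]; exact hA)
      rw [if_pos hi] at this
      rw [this]
      congr 1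
      exact Fin.ext (by rw [pr_val0 i hi, hl])
    | succ m ih =>
      intro i hi hmk
      by_cases hc : s' i = s i
      · exact Or.inl hc
      right
      have hA : InA Ep β C s i (s i) := by
        by_contra hA
        have h1 : i ∈ Dset k Ep β C s := by
          simp only [Dset, Finset.mem_filter, Finset.mem_univ, true_and]
          exact ⟨by omega, hA⟩
        rw [← hD] at h1
        simp only [Dset, Finset.mem_filter, Finset.mem_univ, true_and] at h1
        exact h1.2 ((hs i).2.1 hc).2
      have h3 := (hs i).2.2 hc (by rw [Bn_top hp β s' s i (by omega)]; exact hA)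
      rw [if_neg (by omega)] at h3
      rcases ih (pr i) (by rw [pr_val i (by omega)]; omega) (by omega) with h4 | h4
      · exfalso
        have h5 := ((hs i).2.1 hc).1
        rw [if_neg (by omega), h4, Bn_top hp β s' s i (by omega)] at h5
        have h6 := hbest i (by omega) (s' i) (hv' i)
        omega
      · rw [h3, h4]
  have hBw : ∀ i : Fin n, Bn Ep β s i (s l) ≤ Bn Ep β s' i (s l) := by
    intro i
    unfold Bn
    apply Nat.add_le_add_right
    apply Finset.card_le_card
    intro j
    simp only [Finset.mem_filter, Finset.mem_univ, true_and]
    rintro ⟨h1, h2⟩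
    refine ⟨h1, ?_⟩
    rcases htop j j rfl (hp.2.2.1 _ h1).1 with h3 | h3
    · rw [h3, h2]
    · exact h3
  have hBc : ∀ i : Fin n, ∀ c, c ≠ s l → Bn Ep β s' i c ≤ Bn Ep β s i c := by
    intro i c hc
    unfold Bn
    apply Nat.add_le_add_right
    apply Finset.card_le_card
    intro j
    simp only [Finset.mem_filter, Finset.mem_univ, true_and]
    rintro ⟨h1, h2⟩
    refine ⟨h1, ?_⟩
    rcases htop j j rfl (hp.2.2.1 _ h1).1 with h3 | h3
    · rw [← h3, h2]
    · exact absurd (h2.symm.trans h3) hc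
  have hAw : ∀ i : Fin n, b ≤ i.val → InA Ep β C s' i (s l) := by
    intro i hi z hz
    by_cases hzl : z = s l
    · rw [hzl]
    · have h1 := (hQ i hi).2 z hz
      rw [(hQ i hi).1] at h1
      exact (hBc i z hzl).trans (h1.trans (hBw i))
  have hback : ∀ i : Fin n, b ≤ i.val → s' i = s' l → s' (pr i) = s' l ∧ InA Ep β C s' i (s' i) := by
    intro i hi he
    have hc : s' i ≠ s i := by rw [he, (hQ i hi).1]; exact h
    have h1 := (hs i).2.2 hc (by rw [(hQ i hi).1]; exact hAw i hi)
    rw [if_neg (by omega)] at h1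
    exact ⟨by rw [← h1, he], ((hs i).2.1 hc).2⟩
  have hall : ∀ d : ℕ, ∀ i : Fin n, b ≤ i.val → i.val + d = n - 1 → s' i = s' l := by
    intro d
    induction d with
    | zero =>
      intro i hi hd
      have : i = l := Fin.ext (by omega)
      rw [this]
    | succ d ih =>
      intro i hi hd
      let i1 : Fin n := ⟨i.val + 1, by omega⟩
      have h1 : i1.val = i.val + 1 := rfl
      have h2 := (hback i1 (by omega) (ih i1 (by omega) (by omega))).1
      have : pr i1 = i := Fin.ext (by rw [pr_val i1 (by omega)]; omega)
      rwa [this] at h2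
  have hall' : ∀ i : Fin n, b ≤ i.val → s' i = s' l := by
    intro i hi
    exact hall (n - 1 - i.val) i hi (by omega)
  let ib : Fin n := ⟨b, hbn⟩
  have hib : ib.val = b := rfl
  have hprb : (pr ib).val = b - 1 := by rw [pr_val ib (by omega)]
  have hb1 := hback ib le_rfl (hall' ib le_rfl)
  have hchg : s' (pr ib) ≠ s (pr ib) := by
    intro hcon
    have h1 := hbest ib (by omega) (s' l) (by rw [← hall' ib le_rfl]; exact hv' ib)
    have h2 := hb1.2 (s l) (by rw [← (hQ ib le_rfl).1]; exact hv ib)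
    rw [hall' ib le_rfl] at h2
    have h3 := hBw ib
    have h4 := hBc ib _ h
    rw [← hcon, hb1.1, ind_self, (hQ ib le_rfl).1, ind_ne h] at h1
    omega
  have hkb' : k ≤ b - 1 := by
    by_contra hlt
    rcases htop _ (pr ib) rfl (by omega) with h1 | h1
    · exact hchg h1
    · rw [hb1.1] at h1; exact h h1
  refine ⟨hkb', by omega, ?_⟩
  intro i hi
  by_cases hi2 : b ≤ i.val
  · exact ⟨hall' i hi2, (hback i hi2 (hall' i hi2)).2⟩
  · have : i = pr ib := Fin.ext (by omega)
    rw [this]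
    exact ⟨hb1.1, ((hs _).2.1 hchg).2⟩

lemma best_of_spec {n : ℕ} {M : Type} {Ep : Finset (Fin n × Fin n)}
    (β : Fin n → M → ℕ) (C : Fin n → Finset M) (s s' : Fin n → M)
    (hs : ∀ i : Fin n,
        Spec (Bn Ep β s' i) (if i.val = 0 then s (pr i) else s' (pr i)) (C i) (s i) (s' i))
    (i : Fin n) (hi : i.val ≠ 0) : Best Ep β C s' i := by
  have := (hs i).1
  rw [if_neg hi] at this
  exact this

lemma last_Q {n : ℕ} {M : Type} {Ep : Finset (Fin n × Fin n)}
    (β : Fin n → M → ℕ) (C : Fin n → Finset M) (s s' : Fin n → M)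
    (l : Fin n) (hl : l.val = n - 1)
    (hs : ∀ i : Fin n,
        Spec (Bn Ep β s' i) (if i.val = 0 then s (pr i) else s' (pr i)) (C i) (s i) (s' i))
    (h : s' l ≠ s l) (i : Fin n) (hi : n - 1 ≤ i.val) :
    s' i = s' l ∧ InA Ep β C s' i (s' i) := by
  have : i = l := Fin.ext (by omega)
  subst this
  exact ⟨rfl, ((hs i).2.1 h).2⟩

lemma main_ind {n k : ℕ} {M : Type} {Ep : Finset (Fin n × Fin n)}
    (hp : IsPartitionCycle n k Ep) (β : Fin n → M → ℕ) (C : Fin n → Finset M)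
    (l : Fin n) (hl : l.val = n - 1) (N : ℕ) :
    ∀ (s : Fin n → M) (b : ℕ), Valid C s → (∀ i : Fin n, i.val ≠ 0 → Best Ep β C s i) →
      k ≤ b → b < n → (∀ i : Fin n, b ≤ i.val → s i = s l ∧ InA Ep β C s i (s i)) →
      (Dset k Ep β C s).card * (n - k) + (b - k) ≤ N → Good Ep β C (n * (N + 1)) s := by
  have hk1 := hp.1
  have hk2 := hp.2.1
  induction N using Nat.strong_induction_on with
  | _ N ih =>
    intro s b hv hbest hkb hbn hQ hN
    obtain ⟨s', hv', hr, hs⟩ := round_s14 hp β C s hv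
    by_cases h : s' l = s l
    · refine (hr 0 (round_last hp β C s s' hv' l hl hs h)).mono ?_
      nlinarith
    have step : ∀ b', k ≤ b' → b' < n →
        (∀ i : Fin n, b' ≤ i.val → s' i = s' l ∧ InA Ep β C s' i (s' i)) →
        (Dset k Ep β C s').card * (n - k) + (b' - k) + 1 ≤ N → Good Ep β C (n * (N + 1)) s := by
      intro b' h1 h2 h3 h4
      have := ih (N - 1) (by omega) s' b' hv' (best_of_spec β C s s' hs) h1 h2 h3 (by omega)
      rw [show N - 1 + 1 = N by omega] at this
      exact (hr _ this).mono (le_of_eq (by ring))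
    by_cases hD : Dset k Ep β C s' = Dset k Ep β C s
    · obtain ⟨h1, h2, h3⟩ := good_step hp β C s s' hv hv' l hl hs hbest b hkb hbn hQ hD h
      apply step (b - 1) h1 (by omega) h3
      rw [hD]
      omega
    · have hlt : (Dset k Ep β C s').card < (Dset k Ep β C s).card :=
        Finset.card_lt_card ((Dset_sub hp β C s s' hs).ssubset_of_ne hD)
      apply step (n - 1) (by omega) (by omega) (last_Q β C s s' l hl hs h)
      have := Nat.mul_le_mul_right (n - k) hlt
      rw [Nat.succ_mul] at this
      omega

/-- There is a constant `c` such that every coordination game with arbitrary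
bonuses on an unweighted partition-cycle on `n` nodes with top part of size
`k` admits, from every joint strategy, a finite improvement path of length at
most `c * k * n * (n - k)` ending in a Nash equilibrium. -/
theorem partition_cycle_bonuses_improvement_path :
    ∃ c : ℕ,
      ∀ (n k : ℕ) (Ep : Finset (Fin n × Fin n)),
        IsPartitionCycle n k Ep →
      ∀ (M : Type) [Fintype M],
      ∀ (β : Fin n → M → ℕ),
      ∀ (C : Fin n → Finset M), (∀ i, (C i).Nonempty) →
      ∀ s : Fin n → M, Valid C s →
        ∃ L, L ≤ c * k * n * (n - k) ∧
          ImpPath (pcAdj n Ep) (fun _ _ => 1) β C s L := by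
  refine ⟨3, ?_⟩
  intro n k Ep hp M _ β C _ s hv
  have hk1 := hp.1
  have hk2 := hp.2.1
  let l : Fin n := ⟨n - 1, by omega⟩
  have hl : l.val = n - 1 := rfl
  obtain ⟨s', hv', hr, hs⟩ := round_s14 hp β C s hv
  obtain ⟨d, rfl⟩ : ∃ d, n = k + d := ⟨n - k, by omega⟩
  have hd : 1 ≤ d := by omega
  rw [show k + d - k = d by omega]
  have hkd : 1 ≤ k * d := Nat.mul_pos hk1 hd
  change Good Ep β C _ s
  by_cases h : s' l = s l
  · refine (hr 0 (round_last hp β C s s' hv' l hl hs h)).mono ?_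
    nlinarith [Nat.mul_le_mul_left (k + d) hkd]
  · have hcard : (Dset k Ep β C s').card ≤ k := by
      have : Dset k Ep β C s' ⊆ Finset.univ.filter (fun i : Fin (k + d) => i.val < k) := by
        intro i
        simp only [Dset, Finset.mem_filter, Finset.mem_univ, true_and]
        exact fun h => h.1
      refine (Finset.card_le_card this).trans ?_
      have := Finset.card_le_card_of_injOn (s := Finset.univ.filter (fun i : Fin (k + d) => i.val < k))
        (t := Finset.range k) (fun i => i.val)
        (by intro i hi; simpa using hi) (fun a _ b _ hab => Fin.ext hab)
      simpa using this
    have := main_ind hp β C l hl (k * d + (d - 1)) s' (k + d - 1) hv' (best_of_spec β C s s' hs)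
      (by omega) (by omega) (last_Q β C s s' l hl hs h) (by
        have := Nat.mul_le_mul_right d hcard
        rw [show k + d - k = d by omega]
        omega)
    refine (hr _ this).mono ?_
    rw [show k * d + (d - 1) + 1 = k * d + d by omega]
    have h1 : d ≤ k * d := Nat.le_mul_of_pos_left d hk1
    calc (k + d) * (k * d + d) + (k + d) = (k + d) * (k * d + d + 1) := by ring
      _ ≤ (k + d) * (3 * (k * d)) := Nat.mul_le_mul_left _ (by omega)
      _ = 3 * k * (k + d) * d := by ring

end CG
end

section
/- Consider the coordination game on the simple cycle 1 → 2 → 3 → 1 in which every edge has weight 2, the colour sets are C(1) = {a, b}, C(2) = {a, c}, C(3) = {b, c} for three distinct colours a, b, c, and the bonuses are β(1,a) = β(2,c) = β(3,b) = 1 and β(i,c') = 0 for every other node–colour pair. This game has no Nash equilibrium: in each of the eight joint strategies some player's chosen colour is not a best response to the choices of the other players. -/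
open scoped Classical

namespace CG

/-- Colour sets of Example 2: `C(1) = {a,b}`, `C(2) = {a,c}`, `C(3) = {b,c}`. -/
def colEx {M : Type} [DecidableEq M] (a b c : M) : Fin 3 → Finset M := fun i =>
  if i = 0 then {a, b} else if i = 1 then {a, c} else {b, c}

/-- Bonuses of Example 2: `β(1,a) = β(2,c) = β(3,b) = 1`, otherwise `0`. -/
def bonusEx {M : Type} [DecidableEq M] (a b c : M) : Fin 3 → M → ℕ := fun i x =>
  if (i = 0 ∧ x = a) ∨ (i = 1 ∧ x = c) ∨ (i = 2 ∧ x = b) then 1 else 0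

theorem pay_eq {M : Type} (β : Fin 3 → M → ℕ) (s : Fin 3 → M) :
    payoff (cycAdj 3) (fun _ _ => 2) β s 0 = (if s 2 = s 0 then 2 else 0) + (β 0 (s 0) : ℝ) ∧
    payoff (cycAdj 3) (fun _ _ => 2) β s 1 = (if s 0 = s 1 then 2 else 0) + (β 1 (s 1) : ℝ) ∧
    payoff (cycAdj 3) (fun _ _ => 2) β s 2 = (if s 1 = s 2 then 2 else 0) + (β 2 (s 2) : ℝ) := by
  refine ⟨?_, ?_, ?_⟩ <;>
  · unfold payoff
    rw [Finset.sum_filter, Fin.sum_univ_three]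
    simp [cycAdj]

/-- The coordination game on the simple cycle `1 → 2 → 3 → 1` with all edge
weights `2`, colour sets `C(1) = {a,b}`, `C(2) = {a,c}`, `C(3) = {b,c}` for
distinct colours `a, b, c`, and bonuses `β(1,a) = β(2,c) = β(3,b) = 1` (and
`0` otherwise) has no Nash equilibrium: in every joint strategy some player
can strictly improve by switching to another of his colours. -/
theorem three_cycle_weights_bonuses_no_nash
    {M : Type} [Fintype M] [DecidableEq M] (a b c : M)
    (hab : a ≠ b) (hbc : b ≠ c) (hac : a ≠ c) :
    ∀ s : Fin 3 → M, Valid (colEx a b c) s →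
      ∃ i : Fin 3, ∃ d ∈ colEx a b c i,
        payoff (cycAdj 3) (fun _ _ => 2) (bonusEx a b c) s i <
          payoff (cycAdj 3) (fun _ _ => 2) (bonusEx a b c)
            (Function.update s i d) i := by
  intro s hs
  have h0 := hs 0
  have h1 := hs 1
  have h2 := hs 2
  simp [colEx] at h0 h1 h2
  by_contra hcon
  push Not at hcon
  have k0 := hcon 0
  have k1 := hcon 1
  have k2 := hcon 2
  simp only [(pay_eq _ _).1] at k0
  simp only [(pay_eq _ _).2.1] at k1
  simp only [(pay_eq _ _).2.2] at k2
  simp [colEx, bonusEx] at k0 k1 k2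
  rcases h0 with h0 | h0 <;> rcases h1 with h1 | h1 <;> rcases h2 with h2 | h2 <;>
    simp [h0, h1, h2, hab, hbc, hac, hab.symm, hbc.symm, hac.symm] at k0 k1 k2 <;>
    first | (norm_num at k0; done) | (norm_num at k1; done) | (norm_num at k2; done)

end CG
end

section
/- Consider the coordination game without bonuses on the directed graph with nodes {1,2,3,4,5,6}, edges 1 → 2, 2 → 3, 3 → 1 each of weight 2, and edges 4 → 1, 2 → 4, 5 → 2, 3 → 5, 6 → 3, 1 → 6 each of weight 1, with colour sets C(1) = {a, b}, C(2) = {a, c}, C(3) = {b, c}, C(4) = {a}, C(5) = {c}, C(6) = {b} for three distinct colours a, b, c. This graph is a weighted closed chain of three 3-node cycles, and the game has no Nash equilibrium. -/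
open scoped Classical

namespace CG

/-- Adjacency of a chain of `m` cycles, each of `n` nodes: `node j i` is the
`(i+1)`-st node of the `(j+1)`-st cycle (`0`-based indices). -/
def chainAdj {V : Type} (m n : ℕ) (node : ℕ → ℕ → V) : V → V → Prop :=
  fun u v => ∃ j i, j < m ∧ i < n ∧ u = node j i ∧ v = node j ((i + 1) % n)

/-- `node`, `k` describe an open chain of `m ≥ 2` simple cycles, each on `n ≥ 3`
nodes, where consecutive cycles `C_j, C_{j+1}` share exactly the node
`node j 0 = node (j+1) (k j)` (with `1 ≤ k j < n`) and the cycles are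
otherwise pairwise disjoint, and every vertex lies on some cycle. -/
def IsOpenChain {V : Type} (m n : ℕ) (node : ℕ → ℕ → V) (k : ℕ → ℕ) : Prop :=
  2 ≤ m ∧ 3 ≤ n ∧
  (∀ j, j + 1 < m → 1 ≤ k j ∧ k j < n) ∧
  (∀ j, j + 1 < m → node j 0 = node (j + 1) (k j)) ∧
  (∀ j i j' i', j < m → i < n → j' < m → i' < n → node j i = node j' i' →
      (j = j' ∧ i = i') ∨ (j' = j + 1 ∧ i = 0 ∧ i' = k j) ∨
      (j = j' + 1 ∧ i' = 0 ∧ i = k j')) ∧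
  (∀ v : V, ∃ j i, j < m ∧ i < n ∧ node j i = v)

/-- As `IsOpenChain`, but additionally the last cycle shares exactly the node
`node (m-1) 0 = node 0 (k (m-1))` with the first one. -/
def IsClosedChain {V : Type} (m n : ℕ) (node : ℕ → ℕ → V) (k : ℕ → ℕ) : Prop :=
  2 ≤ m ∧ 3 ≤ n ∧
  (∀ j, j < m → 1 ≤ k j ∧ k j < n) ∧
  (∀ j, j + 1 < m → node j 0 = node (j + 1) (k j)) ∧
  node (m - 1) 0 = node 0 (k (m - 1)) ∧
  (∀ j i j' i', j < m → i < n → j' < m → i' < n → node j i = node j' i' →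
      (j = j' ∧ i = i') ∨ (j' = j + 1 ∧ i = 0 ∧ i' = k j) ∨
      (j = j' + 1 ∧ i' = 0 ∧ i = k j') ∨
      (j = m - 1 ∧ j' = 0 ∧ i = 0 ∧ i' = k (m - 1)) ∨
      (j' = m - 1 ∧ j = 0 ∧ i' = 0 ∧ i = k (m - 1))) ∧
  (∀ v : V, ∃ j i, j < m ∧ i < n ∧ node j i = v)

/-- The edge set of Example 5 (`0`-based labels: paper node `i` is `i - 1`):
`1 → 2, 2 → 3, 3 → 1, 4 → 1, 2 → 4, 5 → 2, 3 → 5, 6 → 3, 1 → 6`. -/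
def edgesEx18 : Finset (Fin 6 × Fin 6) :=
  {(0, 1), (1, 2), (2, 0), (3, 0), (1, 3), (4, 1), (2, 4), (5, 2), (0, 5)}

/-- Weights of Example 5: `2` on `1 → 2`, `2 → 3`, `3 → 1`, and `1` elsewhere. -/
noncomputable def weightEx18 : Fin 6 → Fin 6 → ℝ := fun i j =>
  if (i, j) ∈ ({(0, 1), (1, 2), (2, 0)} : Finset (Fin 6 × Fin 6)) then 2 else 1

/-- Colour sets of Example 5: `C(1) = {a,b}`, `C(2) = {a,c}`, `C(3) = {b,c}`,
`C(4) = {a}`, `C(5) = {c}`, `C(6) = {b}`. -/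
def colEx18 {M : Type} [DecidableEq M] (a b c : M) : Fin 6 → Finset M := fun i =>
  if i = 0 then {a, b} else if i = 1 then {a, c} else if i = 2 then {b, c}
    else if i = 3 then {a} else if i = 4 then {c} else {b}

theorem pay0 {M : Type} (s : Fin 6 → M) :
    payoff (fun u v => (u, v) ∈ edgesEx18) weightEx18 (fun _ _ => 0) s 0 =
      (if s 2 = s 0 then 2 else 0) + (if s 3 = s 0 then 1 else 0) := by
  simp [payoff, Finset.sum_filter, Fin.sum_univ_six, edgesEx18, weightEx18]

theorem pay1 {M : Type} (s : Fin 6 → M) :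
    payoff (fun u v => (u, v) ∈ edgesEx18) weightEx18 (fun _ _ => 0) s 1 =
      (if s 0 = s 1 then 2 else 0) + (if s 4 = s 1 then 1 else 0) := by
  simp [payoff, Finset.sum_filter, Fin.sum_univ_six, edgesEx18, weightEx18]

theorem pay2 {M : Type} (s : Fin 6 → M) :
    payoff (fun u v => (u, v) ∈ edgesEx18) weightEx18 (fun _ _ => 0) s 2 =
      (if s 1 = s 2 then 2 else 0) + (if s 5 = s 2 then 1 else 0) := by
  simp [payoff, Finset.sum_filter, Fin.sum_univ_six, edgesEx18, weightEx18]

def nodeEx (j i : ℕ) : Fin 6 :=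
  match j, i with
  | 0, 0 => 1
  | 0, 1 => 3
  | 0, _ => 0
  | 1, 0 => 2
  | 1, 1 => 4
  | 1, _ => 1
  | _, 0 => 0
  | _, 1 => 5
  | _, _ => 2

/-- The graph of Example 5 is a weighted closed chain of three 3-node cycles,
and the coordination game without bonuses on it (with distinct colours
`a, b, c`) has no Nash equilibrium: in every joint strategy some player can
strictly improve by switching to another of his colours. -/
theorem closed_chain_weighted_no_nash
    {M : Type} [Fintype M] [DecidableEq M] (a b c : M)
    (hab : a ≠ b) (hbc : b ≠ c) (hac : a ≠ c) :
    (∃ (node : ℕ → ℕ → Fin 6) (k : ℕ → ℕ),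
        IsClosedChain 3 3 node k ∧
        ∀ u v : Fin 6, (u, v) ∈ edgesEx18 ↔ chainAdj 3 3 node u v) ∧
    ∀ s : Fin 6 → M, Valid (colEx18 a b c) s →
      ∃ i : Fin 6, ∃ d ∈ colEx18 a b c i,
        payoff (fun u v => (u, v) ∈ edgesEx18) weightEx18 (fun _ _ => 0) s i <
          payoff (fun u v => (u, v) ∈ edgesEx18) weightEx18 (fun _ _ => 0)
            (Function.update s i d) i := by
  refine ⟨⟨nodeEx, fun _ => 2, ⟨by norm_num, by norm_num, by intros; norm_num, ?_, rfl, ?_, ?_⟩, ?_⟩, ?_⟩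
  · intro j hj
    have : j < 2 := by omega
    interval_cases j <;> rfl
  · intro j i j' i' hj hi hj' hi'
    interval_cases j <;> interval_cases i <;> interval_cases j' <;> interval_cases i' <;>
      simp [nodeEx]
  · intro v
    have h : ∀ v : Fin 6, ∃ j < 3, ∃ i < 3, nodeEx j i = v := by decide
    obtain ⟨j, hj, i, hi, h⟩ := h v
    exact ⟨j, i, hj, hi, h⟩
  · intro u v
    have h : ∀ u v : Fin 6, (u, v) ∈ edgesEx18 ↔
        ∃ j < 3, ∃ i < 3, u = nodeEx j i ∧ v = nodeEx j ((i + 1) % 3) := by decide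
    rw [h u v]
    constructor
    · rintro ⟨j, hj, i, hi, h⟩
      exact ⟨j, i, hj, hi, h⟩
    · rintro ⟨j, i, hj, hi, h⟩
      exact ⟨j, hj, i, hi, h⟩
  · intro s hs
    have h0 : s 0 = a ∨ s 0 = b := by simpa [colEx18] using hs 0
    have h1 : s 1 = a ∨ s 1 = c := by simpa [colEx18] using hs 1
    have h2 : s 2 = b ∨ s 2 = c := by simpa [colEx18] using hs 2
    have h3 : s 3 = a := by simpa [colEx18] using hs 3
    have h4 : s 4 = c := by simpa [colEx18] using hs 4
    have h5 : s 5 = b := by simpa [colEx18] using hs 5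
    by_contra! hn
    have ha := hn 0 a (by simp [colEx18])
    have hb := hn 0 b (by simp [colEx18])
    have hc := hn 1 a (by simp [colEx18])
    have hd := hn 1 c (by simp [colEx18])
    have he := hn 2 b (by simp [colEx18])
    have hf := hn 2 c (by simp [colEx18])
    clear hn hs
    rw [pay0, pay0] at ha hb
    rw [pay1, pay1] at hc hd
    rw [pay2, pay2] at he hf
    rcases h0 with h0 | h0 <;> rcases h1 with h1 | h1 <;> rcases h2 with h2 | h2 <;>
      simp [h0, h1, h2, h3, h4, h5, hab, hbc, hac, hab.symm, hbc.symm, hac.symm] at ha hb hc hd he hf <;>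
      norm_num at *

end CG
end
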